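/- arXiv:1501.02212 — 2 statements merged into one kernel-verified Lean document; each statement's English description precedes it below -/
import Mathlib

section
/- Let k ≥ 2 be a natural number. The map (x, y) ↦ V_k(x, y) from ℕ × ℕ to ℕ is injective. -/
/-- The j-th binary digit of `y` (least significant has index 0). -/
def bit (y j : ℕ) : ℕ := y / 2 ^ j % 2

/-- The counter encoding `V_k(x,y)` of the Turing-machine tape `bin(x)#bin(y)^R`,
with `k` bits per tape symbol. -/
def V (k x y : ℕ) : ℕ :=
  2 ^ (k * Nat.size y) * (2 ^ k * x + 1) +
    ∑ j ∈ Finset.range (Nat.size y), 2 ^ (k * (Nat.size y - 1 - j)) * (2 + bit y j)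


def W (k x y m : ℕ) : ℕ :=
  2 ^ (k * m) * (2 ^ k * x + 1) +
    ∑ j ∈ Finset.range m, 2 ^ (k * (m - 1 - j)) * (2 + bit y j)

theorem W_zero (k x y : ℕ) : W k x y 0 = 2 ^ k * x + 1 := by simp [W]

theorem W_succ (k x y m : ℕ) : W k x y (m + 1) = 2 ^ k * W k x y m + (2 + bit y m) := by
  unfold W
  rw [Finset.sum_range_succ, mul_add (2 ^ k), Finset.mul_sum]
  have h : ∀ j ∈ Finset.range m, 2 ^ (k * (m + 1 - 1 - j)) * (2 + bit y j)
      = 2 ^ k * (2 ^ (k * (m - 1 - j)) * (2 + bit y j)) := by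
    intro j hj
    have hj' := Finset.mem_range.mp hj
    have e : m + 1 - 1 - j = (m - 1 - j) + 1 := by omega
    rw [e, mul_add k, pow_add, mul_one]
    ring
  rw [Finset.sum_congr rfl h]
  simp only [Nat.add_sub_cancel, Nat.sub_self, mul_zero, pow_zero, one_mul]
  rw [mul_add k m 1, pow_add, mul_one]
  ring

theorem digit_cancel {B a b r s : ℕ} (hr : r < B) (hs : s < B)
    (h : B * a + r = B * b + s) : a = b ∧ r = s := by
  have h1 : r = s := by
    have := congrArg (· % B) h
    simpa [Nat.mul_add_mod, Nat.mod_eq_of_lt hr, Nat.mod_eq_of_lt hs] using this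
  subst h1
  exact ⟨Nat.eq_of_mul_eq_mul_left (by omega) (Nat.add_right_cancel h), rfl⟩

theorem W_inj (k : ℕ) (hk : 2 ≤ k) (x x' y y' m : ℕ) : ∀ m', W k x y m = W k x' y' m' →
    m = m' ∧ x = x' ∧ ∀ j < m, bit y j = bit y' j := by
  have hB : 4 ≤ 2 ^ k := Nat.pow_le_pow_right (n := 2) (by norm_num) hk
  have hb : ∀ y j, bit y j < 2 := fun y j => Nat.mod_lt _ (by norm_num)
  induction m with
  | zero =>
    intro m' h
    cases m' with
    | zero =>
      rw [W_zero, W_zero] at h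
      exact ⟨rfl, (digit_cancel (by omega) (by omega) h).1, by simp⟩
    | succ n =>
      rw [W_zero, W_succ] at h
      have := hb y' n
      have := (digit_cancel (by omega) (by omega) h).2
      omega
  | succ m ih =>
    intro m' h
    have := hb y m
    cases m' with
    | zero =>
      rw [W_zero, W_succ] at h
      have := (digit_cancel (by omega) (by omega) h).2
      omega
    | succ n =>
      rw [W_succ, W_succ] at h
      have := hb y' n
      obtain ⟨h1, h2⟩ := digit_cancel (by omega) (by omega) h
      obtain ⟨rfl, hx, hj⟩ := ih n h1
      refine ⟨rfl, hx, fun j hjm => ?_⟩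
      rcases Nat.lt_succ_iff_lt_or_eq.mp hjm with hlt | rfl
      · exact hj j hlt
      · omega

theorem V_injective (k : ℕ) (hk : 2 ≤ k) :
    Function.Injective (fun p : ℕ × ℕ => V k p.1 p.2) := by
  rintro ⟨x, y⟩ ⟨x', y'⟩ h
  obtain ⟨hm, hx, hj⟩ := W_inj k hk x x' y y' y.size y'.size h
  have hy : y = y' := by
    apply Nat.eq_of_testBit_eq
    intro j
    by_cases hjs : j < y.size
    · have := hj j hjs
      unfold bit at this
      rw [Nat.testBit_eq_decide_div_mod_eq, Nat.testBit_eq_decide_div_mod_eq, this]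
    · rw [Nat.testBit_lt_two_pow (Nat.size_le.mp (by omega)),
        Nat.testBit_lt_two_pow (Nat.size_le.mp (by omega))]
  rw [hx, hy]
end

section
/- Let k ≥ 2 and let x, y be natural numbers with m = size(y). Then the m-fold iterate of the step (u, v) ↦ (2^k·u + 2 + (v mod 2), v/2) applied to the pair (2^k·x + 1, y) equals (V_k(x,y), 0). (This is the correctness of the input-preparation loop of the counter machine simulating a linear-space Turing machine: starting from the value 2^k·x+1, it repeatedly divides the counter holding y by 2 and multiplies the other counter by 2^k while adding the code of the extracted bit, until the counter holding y is 0.) -/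
theorem prep_iterate (k u y n : ℕ) :
    (fun p : ℕ × ℕ => (2 ^ k * p.1 + 2 + p.2 % 2, p.2 / 2))^[n] (u, y) =
      (2 ^ (k * n) * u + ∑ j ∈ Finset.range n, 2 ^ (k * (n - 1 - j)) * (2 + bit y j),
        y / 2 ^ n) := by
  induction n with
  | zero => simp
  | succ n ih =>
    rw [Function.iterate_succ_apply', ih, Finset.sum_range_succ]
    have h : ∑ j ∈ Finset.range n, 2 ^ (k * (n + 1 - 1 - j)) * (2 + bit y j) =
        2 ^ k * ∑ j ∈ Finset.range n, 2 ^ (k * (n - 1 - j)) * (2 + bit y j) := by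
      rw [Finset.mul_sum]
      refine Finset.sum_congr rfl fun j hj => ?_
      have hj' := Finset.mem_range.mp hj
      have e : n + 1 - 1 - j = (n - 1 - j) + 1 := by omega
      rw [e, Nat.mul_succ, pow_add]
      ring
    rw [h]
    have e2 : n + 1 - 1 - n = 0 := by omega
    rw [e2]
    refine Prod.ext ?_ ?_
    · simp only [bit]
      ring
    · simp only [Nat.div_div_eq_div_mul, pow_succ]

theorem input_preparation_correct (k x y : ℕ) (hk : 2 ≤ k) :
    (fun p : ℕ × ℕ => (2 ^ k * p.1 + 2 + p.2 % 2, p.2 / 2))^[Nat.size y]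
      (2 ^ k * x + 1, y) = (V k x y, 0) := by
  rw [prep_iterate, Nat.div_eq_of_lt (Nat.lt_size_self y)]
  rfl
end
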